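/- The complete bipartite graph K_{3,3} satisfies χ_s(K_{3,3}) = 4, but K_{3,3} has no I,F-partition. -/

import Mathlib

open SimpleGraph

noncomputable def edgeCount {V : Type*} (G : SimpleGraph V) : ℕ := Nat.card G.edgeSet

noncomputable def deg {V : Type*} (G : SimpleGraph V) (v : V) : ℕ := Nat.card (G.neighborSet v)

def TwoIndependent {V : Type*} (G : SimpleGraph V) (S : Set V) : Prop :=
  ∀ u ∈ S, ∀ v ∈ S, u ≠ v → ¬ G.Adj u v ∧ ∀ w, ¬ (G.Adj u w ∧ G.Adj w v)

def IsIFPartition {V : Type*} (G : SimpleGraph V) (A B : Set V) : Prop :=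
  A ∪ B = Set.univ ∧ Disjoint A B ∧ TwoIndependent G A ∧ (G.induce B).IsAcyclic

def IsAssignment {V : Type*} (I F U : Set V) : Prop :=
  I ∪ F ∪ U = Set.univ ∧ Disjoint I F ∧ Disjoint I U ∧ Disjoint F U

noncomputable def rho {V : Type*} (G : SimpleGraph V) (I F U : Set V) (H : G.Subgraph) : ℤ :=
  (H.verts ∩ I).ncard + 4 * (H.verts ∩ F).ncard + 5 * (H.verts ∩ U).ncard
    - 4 * Nat.card H.edgeSet

noncomputable def rhoSet {V : Type*} (G : SimpleGraph V) (I F U : Set V) (S : Set V) : ℤ :=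
  (S ∩ I).ncard + 4 * (S ∩ F).ncard + 5 * (S ∩ U).ncard - 4 * edgeCount (G.induce S)

def IsCounterexample {V : Type*} [Fintype V] (G : SimpleGraph V) (I F U : Set V) : Prop :=
  IsAssignment I F U ∧
  (∀ H : G.Subgraph, H.verts.Nonempty → 0 < rho G I F U H) ∧
  ¬ ∃ A B : Set V, IsIFPartition G A B ∧ I ⊆ A ∧ F ⊆ B

def IsMinCounterexample {V : Type*} [Fintype V] (G : SimpleGraph V) (I F U : Set V) : Prop :=
  IsCounterexample G I F U ∧
  ∀ (n : ℕ) (G' : SimpleGraph (Fin n)) (I' F' U' : Set (Fin n)),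
    IsCounterexample G' I' F' U' →
    Fintype.card V + edgeCount G ≤ n + edgeCount G'

def IsThread {V : Type*} (G : SimpleGraph V) (I F U : Set V) (p : List V) : Prop :=
  p ≠ [] ∧ p.Nodup ∧ p.Chain' G.Adj ∧ (∀ v ∈ p, v ∈ U ∧ deg G v = 2) ∧
  (∀ w, w ∉ p → (∃ a ∈ p, G.Adj a w) → 3 ≤ deg G w ∨ w ∈ I ∪ F)

def BordersThread {V : Type*} (G : SimpleGraph V) (p : List V) (w : V) : Prop :=
  w ∉ p ∧ ∃ a ∈ p, G.Adj a w

def IsStarForest {V : Type*} (H : SimpleGraph V) : Prop :=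
  H.IsAcyclic ∧ ∀ a b c d : V, H.Adj a b → H.Adj b c → H.Adj c d → a = c ∨ b = d

def IsStarColoring {V : Type*} {k : ℕ} (G : SimpleGraph V) (c : V → Fin k) : Prop :=
  (∀ u v, G.Adj u v → c u ≠ c v) ∧
  ∀ i j : Fin k, IsStarForest (G.induce {v | c v = i ∨ c v = j})

def StarColorable {V : Type*} (G : SimpleGraph V) (k : ℕ) : Prop :=
  ∃ c : V → Fin k, IsStarColoring G c

def MadLt {V : Type*} (G : SimpleGraph V) (q : ℚ) : Prop :=
  ∀ H : G.Subgraph, H.verts.Nonempty →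
    (2 * (Nat.card H.edgeSet : ℚ)) / (H.verts.ncard : ℚ) < q

theorem acyclic_of_noP4 {V : Type*} (H : SimpleGraph V)
    (h : ∀ a b c d : V, H.Adj a b → H.Adj b c → H.Adj c d → a = c ∨ b = d) :
    H.IsAcyclic := by
  intro v w hw
  have hl := hw.three_le_length
  have hn := hw.support_nodup
  match w, hl, hn with
  | .cons h1 (.cons h2 (.cons h3 p)), _, hn =>
    rcases h _ _ _ _ h1 h2 h3 with e | e
    · subst e
      simp at hn
    · subst e
      simp at hn

theorem not_acyclic_of_C4 {V : Type*} (H : SimpleGraph V) (a b c d : V)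
    (h1 : H.Adj a b) (h2 : H.Adj b c) (h3 : H.Adj c d) (h4 : H.Adj d a)
    (hac : a ≠ c) (hbd : b ≠ d) : ¬ H.IsAcyclic := by
  intro h
  refine h (.cons h1 (.cons h2 (.cons h3 (.cons h4 .nil)))) ?_
  have := h1.ne
  have := h2.ne
  have := h3.ne
  have := h4.ne
  rw [Walk.isCycle_def]
  refine ⟨?_, by simp, ?_⟩
  · rw [Walk.isTrail_def]
    simp
    grind
  · simp
    grind

theorem fin3_pigeon (f g : Fin 3 → Fin 3) (h : ∀ x y, f x ≠ g y) :
    ∃ a b, a ≠ b ∧ f a = f b := by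
  by_contra! hc
  have hi : Function.Injective f := fun a b e => by
    by_contra hne
    exact hc a b hne e
  obtain ⟨x, hx⟩ := (Finite.injective_iff_surjective.mp hi) (g 0)
  exact h x 0 hx

theorem fin3_two (P : Fin 3 → Prop) (h : ∀ a b, ¬ P a → ¬ P b → a = b) :
    ∃ a b, a ≠ b ∧ P a ∧ P b := by
  by_cases h0 : P 0
  · by_cases h1 : P 1
    · exact ⟨0, 1, by decide, h0, h1⟩
    · refine ⟨0, 2, by decide, h0, ?_⟩
      by_contra h2
      exact absurd (h 1 2 h1 h2) (by decide)
  · refine ⟨1, 2, by decide, ?_, ?_⟩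
    · by_contra h2
      exact absurd (h 0 1 h0 h2) (by decide)
    · by_contra h2
      exact absurd (h 0 2 h0 h2) (by decide)

/-- `K_{3,3}` has star chromatic number exactly `4`, but has no I,F-partition. -/
theorem k33_starChromatic_eq_four_and_no_ifPartition :
    (StarColorable (completeBipartiteGraph (Fin 3) (Fin 3)) 4 ∧
      ¬ StarColorable (completeBipartiteGraph (Fin 3) (Fin 3)) 3) ∧
    ¬ ∃ A B : Set (Fin 3 ⊕ Fin 3),
        IsIFPartition (completeBipartiteGraph (Fin 3) (Fin 3)) A B := by
  refine ⟨⟨⟨Sum.elim (fun _ => 0) Fin.succ, ?_, ?_⟩, ?_⟩, ?_⟩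
  · rintro (u | u) (v | v) h <;> simp at h ⊢
    exact (Fin.succ_ne_zero v).symm
  · intro i j
    have key : ∀ a b c d : {v : Fin 3 ⊕ Fin 3 |
        Sum.elim (fun _ => (0 : Fin 4)) Fin.succ v = i ∨
        Sum.elim (fun _ => (0 : Fin 4)) Fin.succ v = j},
        ((completeBipartiteGraph (Fin 3) (Fin 3)).induce _).Adj a b →
        ((completeBipartiteGraph (Fin 3) (Fin 3)).induce _).Adj b c →
        ((completeBipartiteGraph (Fin 3) (Fin 3)).induce _).Adj c d → a = c ∨ b = d := by
      rintro ⟨a | a, ha⟩ ⟨b | b, hb⟩ ⟨c | c, hc⟩ ⟨d | d, hd⟩ h1 h2 h3 <;>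
        simp at h1 h2 h3 ha hb hc hd ⊢
      · have := Fin.succ_ne_zero b
        have := Fin.succ_ne_zero d
        have e : b.succ = d.succ := by grind
        have e2 : b = d := Fin.succ_injective _ e
        right
        subst e2
        rfl
      · have := Fin.succ_ne_zero a
        have := Fin.succ_ne_zero c
        have e : a.succ = c.succ := by grind
        have e2 : a = c := Fin.succ_injective _ e
        left
        subst e2
        rfl
    exact ⟨acyclic_of_noP4 _ key, key⟩
  · rintro ⟨c, hp, hs⟩
    have hlr : ∀ x y, c (.inl x) ≠ c (.inr y) := fun x y => hp _ _ (by simp)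
    obtain ⟨a, b, hab, e1⟩ := fin3_pigeon (fun x => c (.inl x)) (fun x => c (.inr x)) hlr
    obtain ⟨p, q, hpq, e2⟩ := fin3_pigeon (fun x => c (.inr x)) (fun x => c (.inl x))
      (fun x y => (hlr y x).symm)
    have := (hs (c (.inl a)) (c (.inr p))).2 ⟨.inl a, Or.inl rfl⟩ ⟨.inr p, Or.inr rfl⟩
      ⟨.inl b, Or.inl e1.symm⟩ ⟨.inr q, Or.inr e2.symm⟩ (by simp) (by simp) (by simp)
    simp at this
    tauto
  · rintro ⟨A, B, hU, -, hI, hF⟩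
    have hA : ∀ x, x ∉ B → x ∈ A := fun x hx => by
      have : x ∈ A ∪ B := hU ▸ Set.mem_univ x
      exact this.resolve_right hx
    obtain ⟨a, b, hab, ha, hb⟩ := fin3_two (fun x => Sum.inl x ∈ B) (by
      intro a b ha hb
      by_contra hne
      exact (hI _ (hA _ ha) _ (hA _ hb) (by simpa using hne)).2 (.inr 0) (by simp))
    obtain ⟨p, q, hpq, hp, hq⟩ := fin3_two (fun x => Sum.inr x ∈ B) (by
      intro a b ha hb
      by_contra hne
      exact (hI _ (hA _ ha) _ (hA _ hb) (by simpa using hne)).2 (.inl 0) (by simp))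
    exact not_acyclic_of_C4 _ (⟨.inl a, ha⟩ : B) ⟨.inr p, hp⟩ ⟨.inl b, hb⟩ ⟨.inr q, hq⟩
      (by simp) (by simp) (by simp) (by simp) (by simpa using hab) (by simpa using hpq) hF
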